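/- arXiv:2204.01088 — 2 statements merged into one kernel-verified Lean document; each statement's English description precedes it below -/
import Mathlib

section
/- For the standard Gaussian measure γ on ℝ^d and all Schwartz (or smooth compactly supported) functions f, g : ℝ^d → ℝ, the covariance of f and g under γ satisfies |Cov_γ(f,g)| ≤ ‖∇f‖_{L^p(γ)} · ‖∇g‖_{L^q(γ)} for every p ∈ [1,∞) with q = p/(p-1) (q = ∞ when p = 1). -/
open MeasureTheory Real Set
open scoped ENNReal

/-- The standard Gaussian probability measure on `ℝ^d`. -/
noncomputable def stdGaussian (d : ℕ) : Measure (EuclideanSpace ℝ (Fin d)) :=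
  (volume : Measure (EuclideanSpace ℝ (Fin d))).withDensity
    (fun x => ENNReal.ofReal ((2 * π) ^ (-(d : ℝ) / 2) * Real.exp (-‖x‖ ^ 2 / 2)))

/-!
Let `X` and `Y` be independent standard Gaussian vectors. Rotating `(X, Y)` by the angle `θ`
preserves their joint law, so `cos θ • X + sin θ • Y` is a standard Gaussian vector which moves from
`X` to the independent copy `Y` as `θ` runs from `0` to `π / 2`. Along this path
`E[f(X) g(cos θ • X + sin θ • Y)]` goes from `E[f g]` to `E[f] E[g]`, and Gaussian integration by
parts shows that its derivative is `-sin θ` times the same expression for the gradients,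
`E⟪∇f(X), ∇g(cos θ • X + sin θ • Y)⟫`. By Hölder's inequality the latter is at most
`‖∇f‖_p ‖∇g‖_q` for every `θ`, and `∫ sin θ dθ = 1` over `[0, π / 2]`.
-/

open ProbabilityTheory (IsGaussian)
open scoped Gradient RealInnerProductSpace NNReal

local notation "ρ[" θ "]" => ContinuousLinearMap.rotation θ

section Lipschitz

variable {E F : Type*} [NormedAddCommGroup E] [NormedAddCommGroup F]

lemma memLp_comp_of_lipschitzWith {Ω : Type*} [MeasurableSpace Ω] {μ : Measure Ω}
    [IsFiniteMeasure μ] {p : ℝ≥0∞} {X : Ω → E} (hX : MemLp X p μ) {f : E → F} {K : ℝ≥0}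
    (hf : LipschitzWith K f) : MemLp (fun ω => f (X ω)) p μ := by
  have hsub : LipschitzWith K (fun x => f x - f 0) :=
    .of_dist_le_mul fun x y => by simpa only [dist_sub_right] using hf.dist_le_mul x y
  convert (hsub.comp_memLp (sub_self _) hX).add (memLp_const (f 0)) using 1
  ext ω
  simp

variable [InnerProductSpace ℝ E] [CompleteSpace E]

lemma norm_gradient_eq_norm_fderiv (f : E → ℝ) (x : E) : ‖∇ f x‖ = ‖fderiv ℝ f x‖ := by
  rw [← toDual_gradient, LinearIsometryEquiv.norm_map]

lemma norm_gradient_le_of_lipschitzWith {f : E → ℝ} {K : ℝ≥0} (hf : LipschitzWith K f) (x : E) :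
    ‖∇ f x‖ ≤ K := by
  rw [norm_gradient_eq_norm_fderiv]
  exact norm_fderiv_le_of_lipschitz ℝ hf

lemma continuous_gradient_of_contDiff {f : E → ℝ} (hf : ContDiff ℝ 1 f) : Continuous (∇ f) :=
  (LinearIsometryEquiv.continuous _).comp (hf.continuous_fderiv one_ne_zero)

lemma gradient_comp_add_smul {f : E → ℝ} (hf : Differentiable ℝ f) (c x : E) (b : ℝ) :
    ∇ (fun y => f (c + b • y)) x = b • ∇ f (c + b • x) := by
  have haff : HasFDerivAt (fun y : E => c + b • y) (b • ContinuousLinearMap.id ℝ E) x :=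
    ((hasFDerivAt_id x).const_smul b).const_add c
  refine HasGradientAt.gradient (hasGradientAt_iff_hasFDerivAt.2 ?_)
  refine ((hf (c + b • x)).hasFDerivAt.comp x haff).congr_fderiv ?_
  ext y
  simp

end Lipschitz

section Density

variable {E : Type*} [NormedAddCommGroup E] [InnerProductSpace ℝ E]

/-- The density of the standard Gaussian measure on a finite-dimensional inner product space with
respect to its Lebesgue measure. -/
noncomputable def stdGaussianPDF (x : E) : ℝ :=
  (2 * π) ^ (-(Module.finrank ℝ E : ℝ) / 2) * rexp (-‖x‖ ^ 2 / 2)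

lemma stdGaussianPDF_nonneg (x : E) : 0 ≤ stdGaussianPDF x := by
  unfold stdGaussianPDF
  positivity

lemma continuous_stdGaussianPDF : Continuous (stdGaussianPDF (E := E)) := by
  unfold stdGaussianPDF
  fun_prop

lemma hasFDerivAt_stdGaussianPDF (x : E) :
    HasFDerivAt stdGaussianPDF (-stdGaussianPDF x • innerSL ℝ x) x := by
  have hexponent : HasFDerivAt (fun y : E => -‖y‖ ^ 2 / 2) (-innerSL ℝ x) x := by
    refine (((hasStrictFDerivAt_norm_sq x).hasFDerivAt.neg.mul_const (1 / 2 : ℝ)).congr_fderiv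
      (by ext; simp)).congr_of_eventuallyEq (.of_forall fun y => ?_)
    simp [div_eq_mul_inv]
  refine (hexponent.exp.const_mul ((2 * π) ^ (-(Module.finrank ℝ E : ℝ) / 2))).congr_fderiv ?_
  ext y
  simp [stdGaussianPDF, mul_assoc]

lemma stdGaussianPDF_smul_cexp_inner (x t : E) :
    stdGaussianPDF x • Complex.exp (⟪x, t⟫ * Complex.I) =
      ((2 * π) ^ (-(Module.finrank ℝ E : ℝ) / 2) : ℝ) *
        Complex.exp (-(1 / 2) * ‖x‖ ^ 2 + Complex.I * ⟪t, x⟫) := by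
  rw [Complex.exp_add, real_inner_comm, stdGaussianPDF, Complex.real_smul]
  push_cast
  ring_nf

variable [FiniteDimensional ℝ E] [MeasurableSpace E] [BorelSpace E]

lemma integral_stdGaussianPDF : ∫ x : E, stdGaussianPDF x = 1 := by
  have hexp : ∫ x : E, rexp (-‖x‖ ^ 2 / 2) = (2 * π) ^ ((Module.finrank ℝ E : ℝ) / 2) := by
    convert GaussianFourier.integral_rexp_neg_mul_sq_norm (V := E) (b := 1 / 2) (by norm_num)
      using 2
    · ext x; ring_nf
    · ring
  simp only [stdGaussianPDF]
  rw [integral_const_mul, hexp, ← rpow_add (by positivity)]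
  ring_nf
  exact rpow_zero _

lemma integrable_stdGaussianPDF : Integrable (stdGaussianPDF (E := E)) :=
  integrable_of_integral_eq_one integral_stdGaussianPDF

lemma integral_withDensity_stdGaussianPDF {F : Type*} [NormedAddCommGroup F] [NormedSpace ℝ F]
    (h : E → F) :
    ∫ x, h x ∂volume.withDensity (fun x => ENNReal.ofReal (stdGaussianPDF x)) =
      ∫ x, stdGaussianPDF x • h x := by
  rw [integral_withDensity_eq_integral_toReal_smul
    continuous_stdGaussianPDF.measurable.ennreal_ofReal (.of_forall fun _ => ENNReal.ofReal_lt_top)]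
  simp only [ENNReal.toReal_ofReal (stdGaussianPDF_nonneg _)]

/-- Both measures have the characteristic function `t ↦ exp (-‖t‖² / 2)`. -/
theorem withDensity_stdGaussianPDF :
    volume.withDensity (fun x : E => ENNReal.ofReal (stdGaussianPDF x)) =
      ProbabilityTheory.stdGaussian E := by
  have := isFiniteMeasure_withDensity_ofReal (integrable_stdGaussianPDF (E := E)).2
  have hconst : (((2 * π) ^ (-(Module.finrank ℝ E : ℝ) / 2) : ℝ) : ℂ) *
      ((π : ℂ) / (1 / 2)) ^ ((Module.finrank ℝ E : ℂ) / 2) = 1 := by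
    have hbase : (π : ℂ) / (1 / 2) = ((2 * π : ℝ) : ℂ) := by push_cast; ring
    have hexponent : (Module.finrank ℝ E : ℂ) / 2 = ((Module.finrank ℝ E / 2 : ℝ) : ℂ) := by
      push_cast; rfl
    rw [hbase, hexponent, ← Complex.ofReal_cpow (by positivity), ← Complex.ofReal_mul,
      ← rpow_add (by positivity), neg_div, neg_add_cancel, rpow_zero, Complex.ofReal_one]
  refine Measure.ext_of_charFun (funext fun t => ?_)
  rw [ProbabilityTheory.charFun_stdGaussian, charFun_apply, integral_withDensity_stdGaussianPDF]
  simp only [stdGaussianPDF_smul_cexp_inner]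
  rw [integral_const_mul, GaussianFourier.integral_cexp_neg_mul_sq_norm_add (by norm_num),
    ← mul_assoc, hconst, one_mul, Complex.I_sq]
  ring_nf

lemma integral_stdGaussian_eq {F : Type*} [NormedAddCommGroup F] [NormedSpace ℝ F] (h : E → F) :
    ∫ x, h x ∂ProbabilityTheory.stdGaussian E = ∫ x, stdGaussianPDF x • h x := by
  rw [← withDensity_stdGaussianPDF, integral_withDensity_stdGaussianPDF]

lemma integrable_stdGaussian_iff {F : Type*} [NormedAddCommGroup F] [NormedSpace ℝ F] {h : E → F} :
    Integrable h (ProbabilityTheory.stdGaussian E) ↔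
      Integrable (fun x => stdGaussianPDF x • h x) := by
  rw [← withDensity_stdGaussianPDF, integrable_withDensity_iff_integrable_smul'
    continuous_stdGaussianPDF.measurable.ennreal_ofReal (.of_forall fun _ => ENNReal.ofReal_lt_top)]
  simp only [ENNReal.toReal_ofReal (stdGaussianPDF_nonneg _)]

end Density

section IntegrationByParts

variable {E : Type*} [NormedAddCommGroup E] [InnerProductSpace ℝ E] [FiniteDimensional ℝ E]
  [MeasurableSpace E] [BorelSpace E]

local notation "γ" => ProbabilityTheory.stdGaussian E

theorem integral_mul_inner_stdGaussian {h : E → ℝ} {v : E} (hd : Differentiable ℝ h)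
    (hint : Integrable h γ) (hmul : Integrable (fun x => h x * ⟪v, x⟫) γ)
    (hderiv : Integrable (fun x => ⟪v, ∇ h x⟫) γ) :
    ∫ x, h x * ⟪v, x⟫ ∂γ = ∫ x, ⟪v, ∇ h x⟫ ∂γ := by
  have hpdf (x : E) : fderiv ℝ stdGaussianPDF x v = -(stdGaussianPDF x * ⟪v, x⟫) := by
    rw [(hasFDerivAt_stdGaussianPDF x).fderiv]
    simp [real_inner_comm]
  have hgrad (x : E) : fderiv ℝ h x v = ⟪v, ∇ h x⟫ := by simp
  rw [integrable_stdGaussian_iff] at hint hmul hderiv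
  have hparts := integral_mul_fderiv_eq_neg_fderiv_mul_of_integrable (μ := volume)
    (f := stdGaussianPDF) (g := h) (v := v)
    (hmul.neg.congr (.of_forall fun x => by simp only [hpdf, Pi.neg_apply, smul_eq_mul]; ring))
    (by simpa only [hgrad, smul_eq_mul, mul_comm] using hderiv) hint
    (fun x _ => (hasFDerivAt_stdGaussianPDF x).differentiableAt) (fun x _ => hd x)
  simp only [hgrad, hpdf, neg_mul, integral_neg, neg_neg] at hparts
  simp only [integral_stdGaussian_eq, smul_eq_mul, hparts]
  exact integral_congr_ae (.of_forall fun x => by ring)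

theorem integral_comp_add_smul_mul_inner_stdGaussian {f : E → ℝ} {K : ℝ≥0} (hf : ContDiff ℝ 1 f)
    (hfK : LipschitzWith K f) (c v : E) (b : ℝ) :
    ∫ y, f (c + b • y) * ⟪v, y⟫ ∂γ = b * ∫ y, ⟪v, ∇ f (c + b • y)⟫ ∂γ := by
  have hd : Differentiable ℝ f := hf.differentiable one_ne_zero
  have hd' : Differentiable ℝ (fun y => f (c + b • y)) := hd.comp (by fun_prop)
  have hgrad := gradient_comp_add_smul hd c (b := b)
  have hid : MemLp id 2 γ := IsGaussian.memLp_id _ 2 ENNReal.ofNat_ne_top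
  have hmem : MemLp (fun y => f (c + b • y)) 2 γ :=
    memLp_comp_of_lipschitzWith hid (hfK.comp ((LipschitzWith.const c).add (lipschitzWith_smul b)))
  have hderiv : Integrable (fun y => ⟪v, ∇ f (c + b • y)⟫) γ := by
    have hcont := continuous_gradient_of_contDiff hf
    refine .of_bound (Continuous.aestronglyMeasurable (by fun_prop)) (‖v‖ * K)
      (.of_forall fun y => (norm_inner_le_norm _ _).trans ?_)
    gcongr
    exact norm_gradient_le_of_lipschitzWith hfK _
  rw [← integral_const_mul, integral_mul_inner_stdGaussian hd' (hmem.integrable one_le_two)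
    (hmem.integrable_mul (hid.const_inner v))]
  · simp only [hgrad, real_inner_smul_right]
  · simpa only [hgrad, real_inner_smul_right] using hderiv.const_mul b

end IntegrationByParts

section Rotation

variable {E : Type*} [NormedAddCommGroup E] [NormedSpace ℝ E]

lemma rotation_neg_rotation (θ : ℝ) (w : E × E) : ρ[-θ] (ρ[θ] w) = w := by
  have hcs := cos_sq_add_sin_sq θ
  ext : 1 <;> simp only [ContinuousLinearMap.rotation_apply, cos_neg, sin_neg]
  · linear_combination (norm := module) hcs • w.1
  · linear_combination (norm := module) hcs • w.2

lemma hasDerivAt_fst_rotation (w : E × E) (θ : ℝ) :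
    HasDerivAt (fun t => (ρ[t] w).1) (ρ[θ] w).2 θ :=
  ((hasDerivAt_cos θ).smul_const w.1).add ((hasDerivAt_sin θ).smul_const w.2)

lemma norm_snd_rotation_le (θ : ℝ) (w : E × E) : ‖(ρ[θ] w).2‖ ≤ ‖w.1‖ + ‖w.2‖ := by
  refine (norm_add_le _ _).trans (add_le_add ?_ ?_) <;> rw [norm_smul]
  · exact mul_le_of_le_one_left (norm_nonneg _) (by simpa using abs_sin_le_one θ)
  · exact mul_le_of_le_one_left (norm_nonneg _) (abs_cos_le_one θ)

lemma continuous_fst_rotation (w : E × E) : Continuous fun θ => (ρ[θ] w).1 := by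
  simp only [ContinuousLinearMap.rotation_apply]
  fun_prop

variable [MeasurableSpace E] [BorelSpace E] [SecondCountableTopology E]

lemma measurableEmbedding_rotation (θ : ℝ) : MeasurableEmbedding (ρ[θ] : E × E →L[ℝ] E × E) := by
  have hright (w : E × E) : ρ[θ] (ρ[-θ] w) = w := by
    simpa only [neg_neg] using rotation_neg_rotation (-θ) w
  exact (ContinuousLinearEquiv.equivOfInverse _ _ (rotation_neg_rotation θ) hright
    ).toHomeomorph.measurableEmbedding

lemma measurePreserving_rotation [CompleteSpace E] {μ : Measure E} [IsGaussian μ]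
    (hμ : ∫ x, x ∂μ = 0) (θ : ℝ) : MeasurePreserving ρ[θ] (μ.prod μ) (μ.prod μ) :=
  ⟨by fun_prop, IsGaussian.map_rotation_eq_self hμ θ⟩

lemma integral_comp_rotation {F : Type*} [NormedAddCommGroup F] [NormedSpace ℝ F] {μ : Measure E}
    {θ : ℝ} (hμ : MeasurePreserving ρ[θ] (μ.prod μ) (μ.prod μ)) (Φ : E × E → E × E → F) :
    ∫ w, Φ w (ρ[θ] w) ∂μ.prod μ = ∫ w, Φ (ρ[-θ] w) w ∂μ.prod μ := by
  simpa only [rotation_neg_rotation] using hμ.integral_comp (measurableEmbedding_rotation θ)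
    fun w => Φ (ρ[-θ] w) w

lemma integrable_comp_rotation_iff {F : Type*} [NormedAddCommGroup F] {μ : Measure E} {θ : ℝ}
    (hμ : MeasurePreserving ρ[θ] (μ.prod μ) (μ.prod μ)) (Φ : E × E → E × E → F) :
    Integrable (fun w => Φ w (ρ[θ] w)) (μ.prod μ) ↔
      Integrable (fun w => Φ (ρ[-θ] w) w) (μ.prod μ) := by
  simpa only [Function.comp_def, rotation_neg_rotation] using
    hμ.integrable_comp_emb (measurableEmbedding_rotation θ) (g := fun w => Φ (ρ[-θ] w) w)

end Rotation

section RotationCorrelation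

variable {E H : Type*} [NormedAddCommGroup E] [NormedSpace ℝ E] [MeasurableSpace E]
  [NormedAddCommGroup H] [InnerProductSpace ℝ H] {μ : Measure E}

/-- The correlation `E⟪F(X), G(cos θ • X + sin θ • Y)⟫` for independent `X`, `Y` with law `μ`. It
interpolates between `E⟪F(X), G(X)⟫` at `θ = 0` and `E⟪F(X), G(Y)⟫` at `θ = π / 2`. The point
`cos θ • X + sin θ • Y` is encoded as the first component of the rotation of `(X, Y)` by `θ`. -/
noncomputable def rotationCorrelation (μ : Measure E) (F G : E → H) (θ : ℝ) : ℝ :=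
  ∫ w, ⟪F w.1, G (ρ[θ] w).1⟫ ∂μ.prod μ

lemma rotationCorrelation_zero [IsProbabilityMeasure μ] (F G : E → H) :
    rotationCorrelation μ F G 0 = ∫ x, ⟪F x, G x⟫ ∂μ := by
  simp only [rotationCorrelation, ContinuousLinearMap.rotation_apply, cos_zero, sin_zero, one_smul,
    zero_smul, add_zero]
  rw [integral_fun_fst (fun x => ⟪F x, G x⟫), probReal_univ, one_smul]

lemma rotationCorrelation_pi_div_two [SFinite μ] (f g : E → ℝ) :
    rotationCorrelation μ f g (π / 2) = (∫ x, f x ∂μ) * ∫ x, g x ∂μ := by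
  simp only [rotationCorrelation, ContinuousLinearMap.rotation_apply, cos_pi_div_two,
    sin_pi_div_two, one_smul, zero_smul, zero_add, Real.inner_apply]
  exact integral_prod_mul f g

theorem ofReal_abs_rotationCorrelation_le_eLpNorm_mul_eLpNorm [IsProbabilityMeasure μ] {θ : ℝ}
    (hμ : MeasurePreserving ρ[θ] (μ.prod μ) (μ.prod μ)) {F G : E → H}
    (hF : AEStronglyMeasurable F μ) (hG : AEStronglyMeasurable G μ) (p q : ℝ≥0∞)
    [ENNReal.HolderConjugate p q] :
    ENNReal.ofReal |rotationCorrelation μ F G θ| ≤ eLpNorm F p μ * eLpNorm G q μ := by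
  have hfst : MeasurePreserving Prod.fst (μ.prod μ) μ := measurePreserving_fst
  have hrot : MeasurePreserving (fun w => (ρ[θ] w).1) (μ.prod μ) μ := hfst.comp hμ
  calc ENNReal.ofReal |rotationCorrelation μ F G θ|
      ≤ ∫⁻ w, ‖⟪F w.1, G (ρ[θ] w).1⟫‖ₑ ∂μ.prod μ := by
        rw [← Real.enorm_eq_ofReal_abs]
        exact enorm_integral_le_lintegral_enorm _
    _ = eLpNorm (fun w => ⟪F w.1, G (ρ[θ] w).1⟫) 1 (μ.prod μ) :=
        eLpNorm_one_eq_lintegral_enorm.symm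
    _ ≤ (1 : ℝ≥0) * eLpNorm (fun w : E × E => F w.1) p (μ.prod μ) *
          eLpNorm (fun w => G (ρ[θ] w).1) q (μ.prod μ) :=
        eLpNorm_le_eLpNorm_mul_eLpNorm'_of_norm (hF.comp_measurePreserving hfst)
          (hG.comp_measurePreserving hrot) (fun a b => ⟪a, b⟫) 1
          (.of_forall fun w => by simpa using norm_inner_le_norm (𝕜 := ℝ) (F w.1) _)
    _ = eLpNorm F p μ * eLpNorm G q μ := by
        rw [ENNReal.coe_one, one_mul]
        exact congrArg₂ _ (eLpNorm_comp_measurePreserving hF hfst)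
          (eLpNorm_comp_measurePreserving hG hrot)

variable [BorelSpace E] [SecondCountableTopology E]

lemma continuous_rotationCorrelation [IsFiniteMeasure μ] {F G : E → H} {K L : ℝ}
    (hF : AEStronglyMeasurable F μ) (hFK : ∀ x, ‖F x‖ ≤ K) (hG : Continuous G)
    (hGL : ∀ x, ‖G x‖ ≤ L) : Continuous (rotationCorrelation μ F G) := by
  have hK : 0 ≤ K := (norm_nonneg _).trans (hFK 0)
  refine continuous_of_dominated (bound := fun _ => K * L) (fun θ => ?_)
    (fun θ => .of_forall fun w => ?_) (integrable_const _) (.of_forall fun w => ?_)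
  · exact hF.comp_fst.inner (Continuous.aestronglyMeasurable (by fun_prop))
  · exact (norm_inner_le_norm _ _).trans (mul_le_mul (hFK _) (hGL _) (norm_nonneg _) hK)
  · exact continuous_const.inner (hG.comp (continuous_fst_rotation w))

theorem hasDerivAt_rotationCorrelation [IsFiniteMeasure μ] {f g : E → ℝ} {L : ℝ≥0}
    (hid : MemLp id 2 μ) (hf : MemLp f 2 μ) (hg : ContDiff ℝ 1 g) (hgL : LipschitzWith L g)
    (θ : ℝ) :
    Integrable (fun w => f w.1 * fderiv ℝ g (ρ[θ] w).1 (ρ[θ] w).2) (μ.prod μ) ∧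
    HasDerivAt (rotationCorrelation μ f g)
      (∫ w, f w.1 * fderiv ℝ g (ρ[θ] w).1 (ρ[θ] w).2 ∂μ.prod μ) θ := by
  have hf₁ : MemLp (fun w : E × E => f w.1) 2 (μ.prod μ) := hf.comp_fst μ
  have hid₁ : MemLp (fun w : E × E => ‖w.1‖) 2 (μ.prod μ) := hid.norm.comp_fst μ
  have hid₂ : MemLp (fun w : E × E => ‖w.2‖) 2 (μ.prod μ) := hid.norm.comp_snd μ
  have hg₂ : MemLp (fun w => g (ρ[θ] w).1) 2 (μ.prod μ) :=
    memLp_comp_of_lipschitzWith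
      (((hid.comp_fst μ).const_smul (cos θ)).add ((hid.comp_snd μ).const_smul (sin θ))) hgL
  have hdom : Integrable (fun w : E × E => ‖f w.1‖ * (L * (‖w.1‖ + ‖w.2‖))) (μ.prod μ) :=
    hf₁.norm.integrable_mul ((hid₁.add hid₂).const_mul (L : ℝ))
  have hcorr : rotationCorrelation μ f g = fun t => ∫ w, f w.1 * g (ρ[t] w).1 ∂μ.prod μ := by
    funext t
    simp only [rotationCorrelation, Real.inner_apply]
  rw [hcorr]
  refine hasDerivAt_integral_of_dominated_loc_of_deriv_le Filter.univ_mem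
    (F := fun t (w : E × E) => f w.1 * g (ρ[t] w).1)
    (F' := fun t w => f w.1 * fderiv ℝ g (ρ[t] w).1 (ρ[t] w).2)
    (.of_forall fun t => ?_) (hf₁.integrable_mul hg₂) ?_ (.of_forall fun w t _ => ?_) hdom
    (.of_forall fun w t _ => ?_)
  · exact hf₁.1.mul (Continuous.aestronglyMeasurable (by fun_prop))
  · exact hf₁.1.mul (Continuous.aestronglyMeasurable (by fun_prop))
  · rw [norm_mul]
    gcongr
    exact ContinuousLinearMap.le_of_opNorm_le_of_le _ (norm_fderiv_le_of_lipschitz ℝ hgL)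
      (norm_snd_rotation_le t w)
  · exact (((hg.differentiable one_ne_zero _).hasFDerivAt).comp_hasDerivAt t
      (hasDerivAt_fst_rotation w t)).const_mul (f w.1)

end RotationCorrelation

section Covariance

variable {E : Type*} [NormedAddCommGroup E] [InnerProductSpace ℝ E] [FiniteDimensional ℝ E]
  [MeasurableSpace E] [BorelSpace E] {f g : E → ℝ} {K L : ℝ≥0}

local notation "γ" => ProbabilityTheory.stdGaussian E

lemma measurePreserving_rotation_stdGaussian (θ : ℝ) :
    MeasurePreserving ρ[θ] (Measure.prod γ γ) (Measure.prod γ γ) :=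
  measurePreserving_rotation ProbabilityTheory.integral_id_stdGaussian θ

lemma integral_mul_fderiv_rotation_stdGaussian (hf : ContDiff ℝ 1 f) (hfK : LipschitzWith K f)
    (hg : ContDiff ℝ 1 g) (hgL : LipschitzWith L g) {θ : ℝ}
    (hint : Integrable (fun w => f w.1 * fderiv ℝ g (ρ[θ] w).1 (ρ[θ] w).2)
      (Measure.prod γ γ)) :
    ∫ w, f w.1 * fderiv ℝ g (ρ[θ] w).1 (ρ[θ] w).2 ∂Measure.prod γ γ =
      -sin θ * rotationCorrelation γ (∇ f) (∇ g) θ := by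
  have hρ : MeasurePreserving ρ[θ] (Measure.prod γ γ) (Measure.prod γ γ) :=
    measurePreserving_rotation_stdGaussian θ
  have hcf := continuous_gradient_of_contDiff hf
  have hcg := continuous_gradient_of_contDiff hg
  have hgrad_int :
      Integrable (fun w : E × E => ⟪∇ g w.1, ∇ f (ρ[-θ] w).1⟫) (Measure.prod γ γ) := by
    refine .of_bound (Continuous.aestronglyMeasurable (by fun_prop)) (L * K)
      (.of_forall fun w => (norm_inner_le_norm _ _).trans ?_)
    gcongr
    · exact norm_gradient_le_of_lipschitzWith hgL _
    · exact norm_gradient_le_of_lipschitzWith hfK _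
  calc ∫ w, f w.1 * fderiv ℝ g (ρ[θ] w).1 (ρ[θ] w).2 ∂Measure.prod γ γ
      = ∫ w, f (ρ[-θ] w).1 * fderiv ℝ g w.1 w.2 ∂Measure.prod γ γ :=
        integral_comp_rotation hρ fun w z => f w.1 * fderiv ℝ g z.1 z.2
    _ = ∫ u, ∫ v, f (cos (-θ) • u + sin (-θ) • v) * ⟪∇ g u, v⟫ ∂γ ∂γ := by
        rw [integral_prod _ ((integrable_comp_rotation_iff hρ
          fun w z => f w.1 * fderiv ℝ g z.1 z.2).1 hint)]
        simp only [inner_gradient_left, ContinuousLinearMap.rotation_apply]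
    _ = ∫ u, sin (-θ) * ∫ v, ⟪∇ g u, ∇ f (cos (-θ) • u + sin (-θ) • v)⟫ ∂γ ∂γ := by
        simp only [integral_comp_add_smul_mul_inner_stdGaussian hf hfK]
    _ = -sin θ * ∫ w, ⟪∇ g w.1, ∇ f (ρ[-θ] w).1⟫ ∂Measure.prod γ γ := by
        rw [integral_const_mul, sin_neg, integral_prod _ hgrad_int]
        simp only [ContinuousLinearMap.rotation_apply, sin_neg]
    _ = -sin θ * rotationCorrelation γ (∇ f) (∇ g) θ := by
        rw [rotationCorrelation, integral_comp_rotation hρ fun w z => ⟪∇ f w.1, ∇ g z.1⟫]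
        exact congrArg _ (integral_congr_ae (.of_forall fun w => real_inner_comm _ _))

theorem hasDerivAt_rotationCorrelation_stdGaussian (hf : ContDiff ℝ 1 f) (hfK : LipschitzWith K f)
    (hg : ContDiff ℝ 1 g) (hgL : LipschitzWith L g) (θ : ℝ) :
    HasDerivAt (rotationCorrelation γ f g) (-sin θ * rotationCorrelation γ (∇ f) (∇ g) θ) θ := by
  have hid : MemLp id 2 γ := IsGaussian.memLp_id _ 2 ENNReal.ofNat_ne_top
  have hfmem : MemLp f 2 γ := memLp_comp_of_lipschitzWith hid hfK
  obtain ⟨hint, hderiv⟩ := hasDerivAt_rotationCorrelation hid hfmem hg hgL θ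
  rwa [integral_mul_fderiv_rotation_stdGaussian hf hfK hg hgL hint] at hderiv

theorem integral_mul_sub_eq_integral_sin_mul_rotationCorrelation (hf : ContDiff ℝ 1 f)
    (hfK : LipschitzWith K f) (hg : ContDiff ℝ 1 g) (hgL : LipschitzWith L g) :
    (∫ x, f x * g x ∂γ) - (∫ x, f x ∂γ) * ∫ x, g x ∂γ =
      ∫ θ in (0)..(π / 2), sin θ * rotationCorrelation γ (∇ f) (∇ g) θ := by
  have hcont : Continuous (rotationCorrelation γ (∇ f) (∇ g)) :=
    continuous_rotationCorrelation (continuous_gradient_of_contDiff hf).aestronglyMeasurable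
      (norm_gradient_le_of_lipschitzWith hfK) (continuous_gradient_of_contDiff hg)
      (norm_gradient_le_of_lipschitzWith hgL)
  have hftc := intervalIntegral.integral_eq_sub_of_hasDerivAt (a := 0) (b := π / 2)
    (fun θ _ => hasDerivAt_rotationCorrelation_stdGaussian hf hfK hg hgL θ)
    (Continuous.intervalIntegrable (by fun_prop) _ _)
  simp only [neg_mul, intervalIntegral.integral_neg, rotationCorrelation_zero,
    rotationCorrelation_pi_div_two, Real.inner_apply] at hftc
  linarith

theorem gaussian_covariance_estimate_general (hf : ContDiff ℝ 1 f) (hfK : LipschitzWith K f)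
    (hg : ContDiff ℝ 1 g) (hgL : LipschitzWith L g) (p q : ℝ≥0∞) [ENNReal.HolderConjugate p q] :
    ENNReal.ofReal |(∫ x, f x * g x ∂γ) - (∫ x, f x ∂γ) * ∫ x, g x ∂γ| ≤
      eLpNorm (∇ f) p γ * eLpNorm (∇ g) q γ := by
  set A := eLpNorm (∇ f) p γ * eLpNorm (∇ g) q γ
  rcases eq_or_ne A ∞ with hA | hA
  · simp only [hA, le_top]
  have hcorr (θ : ℝ) : |rotationCorrelation γ (∇ f) (∇ g) θ| ≤ A.toReal :=
    (ENNReal.ofReal_le_iff_le_toReal hA).1 <|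
      ofReal_abs_rotationCorrelation_le_eLpNorm_mul_eLpNorm
        (measurePreserving_rotation_stdGaussian θ)
        (continuous_gradient_of_contDiff hf).aestronglyMeasurable
        (continuous_gradient_of_contDiff hg).aestronglyMeasurable p q
  rw [integral_mul_sub_eq_integral_sin_mul_rotationCorrelation hf hfK hg hgL]
  refine ENNReal.ofReal_le_of_le_toReal ?_
  have hbound (θ : ℝ) (hθ : θ ∈ Ioc 0 (π / 2)) :
      ‖sin θ * rotationCorrelation γ (∇ f) (∇ g) θ‖ ≤ sin θ * A.toReal := by
    have hsin : 0 ≤ sin θ := sin_nonneg_of_nonneg_of_le_pi hθ.1.le (by linarith [hθ.2, pi_pos])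
    rw [norm_mul, norm_of_nonneg hsin]
    gcongr
    exact hcorr θ
  calc |∫ θ in (0)..(π / 2), sin θ * rotationCorrelation γ (∇ f) (∇ g) θ|
      ≤ ∫ θ in (0)..(π / 2), sin θ * A.toReal :=
        intervalIntegral.norm_integral_le_of_norm_le pi_div_two_pos.le (.of_forall hbound)
          (Continuous.intervalIntegrable (by fun_prop) _ _)
    _ = A.toReal := by
        rw [intervalIntegral.integral_mul_const, integral_sin, cos_zero, cos_pi_div_two, sub_zero,
          one_mul]

end Covariance

lemma stdGaussian_eq_stdGaussian_euclideanSpace (d : ℕ) :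
    stdGaussian d = ProbabilityTheory.stdGaussian (EuclideanSpace ℝ (Fin d)) := by
  rw [← withDensity_stdGaussianPDF]
  simp only [stdGaussian, stdGaussianPDF, finrank_euclideanSpace_fin]

/-- Gaussian covariance estimate `|Cov_γ(f,g)| ≤ ‖∇f‖_{L^p(γ)} ‖∇g‖_{L^q(γ)}`
for conjugate exponents `p ∈ [1,∞)`, `q = p/(p-1)` (`q = ∞` when `p = 1`). -/
theorem gaussian_covariance_estimate (d : ℕ)
    (f g : EuclideanSpace ℝ (Fin d) → ℝ)
    (hf : ContDiff ℝ (⊤ : ℕ∞) f) (hfc : HasCompactSupport f)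
    (hg : ContDiff ℝ (⊤ : ℕ∞) g) (hgc : HasCompactSupport g)
    (p q : ℝ≥0∞) (hp1 : 1 ≤ p) (hp2 : p ≠ ∞) (hpq : 1 / p + 1 / q = 1) :
    ENNReal.ofReal |(∫ x, f x * g x ∂(stdGaussian d)) -
        (∫ x, f x ∂(stdGaussian d)) * (∫ x, g x ∂(stdGaussian d))| ≤
      eLpNorm (fun x => ‖gradient f x‖) p (stdGaussian d) *
        eLpNorm (fun x => ‖gradient g x‖) q (stdGaussian d) := by
  have hf₁ : ContDiff ℝ 1 f := hf.of_le (by exact_mod_cast le_top)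
  have hg₁ : ContDiff ℝ 1 g := hg.of_le (by exact_mod_cast le_top)
  obtain ⟨K, hfK⟩ := hf₁.lipschitzWith_of_hasCompactSupport hfc one_ne_zero
  obtain ⟨L, hgL⟩ := hg₁.lipschitzWith_of_hasCompactSupport hgc one_ne_zero
  have : ENNReal.HolderConjugate p q := ENNReal.holderConjugate_iff.2 (by simpa using hpq)
  simpa only [stdGaussian_eq_stdGaussian_euclideanSpace, eLpNorm_norm] using
    gaussian_covariance_estimate_general hf₁ hfK hg₁ hgL p q
end

section
/- Let μ, ν be probability measures on ℝ^d with finite first moments. Then W₁(μ,ν) = sup { |∫h dμ - ∫h dν| : h ∈ C_c^∞(ℝ^d), ‖h‖_Lip ≤ 1 }, i.e. the Kantorovich–Rubinstein supremum can be restricted to smooth compactly supported 1-Lipschitz functions. -/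
open MeasureTheory Real Set

/-!
Clamping a `1`-Lipschitz function `h` between `±(R - ‖x‖)⁺` yields a compactly supported function
which is still `1`-Lipschitz, because truncation by a Lipschitz envelope only takes minima and
maxima; a multiplicative cutoff `ψ (x / R) * h x` would instead increase the Lipschitz constant and
require rescaling. Convolution with a probability density preserves the Lipschitz constant and, for
a density concentrated near `0`, moves the function by little in the uniform norm. The resulting
smooth functions converge pointwise to `h` and are dominated by `|h| + 1`, which is integrable as
soon as the first moments are finite. Hence the values `|∫ h dμ - ∫ h dν|` attained on smooth
compactly supported functions are dense among all of them, and the two suprema agree.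
-/

open Filter Metric ContinuousLinearMap
open scoped Convolution Topology NNReal ContDiff

section Truncation

/-- The truncation `y ↦ max (-b) (min y b)` of the real line to `[-b, b]`, written `G_b` in the
paper; it is meant for `0 ≤ b`. -/
def symmClamp (b y : ℝ) : ℝ :=
  max (-b) (min y b)

lemma abs_symmClamp_le {b : ℝ} (hb : 0 ≤ b) (y : ℝ) : |symmClamp b y| ≤ |y| :=
  abs_le.2 ⟨le_max_of_le_right (le_min (neg_abs_le y) ((neg_nonpos.2 (abs_nonneg y)).trans hb)),
    max_le ((neg_nonpos.2 hb).trans (abs_nonneg y)) (min_le_of_left_le (le_abs_self y))⟩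

lemma symmClamp_eq_self {b y : ℝ} (h : |y| ≤ b) : symmClamp b y = y := by
  rw [symmClamp, min_eq_left (abs_le.1 h).2, max_eq_right (abs_le.1 h).1]

lemma symmClamp_zero_left (y : ℝ) : symmClamp 0 y = 0 := by
  rw [symmClamp, neg_zero, max_eq_left (min_le_right y 0)]

lemma lipschitzWith_symmClamp {α : Type*} [PseudoEMetricSpace α] {b h : α → ℝ} {K : ℝ≥0}
    (hb : LipschitzWith K b) (hh : LipschitzWith K h) :
    LipschitzWith K fun x ↦ symmClamp (b x) (h x) := by
  simpa only [max_self, symmClamp] using! hb.neg.max (hh.min hb)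

variable {E : Type*} [SeminormedAddCommGroup E]

/-- The function `h` truncated by the cone of slope `K` and base the ball of radius `R` about the
origin. The cone has slope `K` so that truncation preserves `K`-Lipschitz functions. -/
def coneTruncation (K : ℝ≥0) (R : ℝ) (h : E → ℝ) (x : E) : ℝ :=
  symmClamp (max (K * (R - ‖x‖)) 0) (h x)

lemma abs_coneTruncation_le (K : ℝ≥0) (R : ℝ) (h : E → ℝ) (x : E) :
    |coneTruncation K R h x| ≤ |h x| :=
  abs_symmClamp_le (le_max_right _ _) _

lemma coneTruncation_eq_self {K : ℝ≥0} {R : ℝ} {h : E → ℝ} {x : E}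
    (hx : |h x| ≤ K * (R - ‖x‖)) : coneTruncation K R h x = h x :=
  symmClamp_eq_self (hx.trans (le_max_left _ _))

lemma lipschitzWith_coneTruncation {K : ℝ≥0} (R : ℝ) {h : E → ℝ} (hh : LipschitzWith K h) :
    LipschitzWith K (coneTruncation K R h) := by
  have cone_lipschitz : LipschitzWith K fun x : E ↦ K * (R - ‖x‖) :=
    LipschitzWith.of_le_add_mul K fun x y ↦ by
      rw [← mul_add]
      gcongr
      linarith [norm_le_norm_add_norm_sub' y x, dist_eq_norm' x y]
  exact lipschitzWith_symmClamp (cone_lipschitz.max_const 0) hh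

lemma hasCompactSupport_coneTruncation [ProperSpace E] (K : ℝ≥0) (R : ℝ) (h : E → ℝ) :
    HasCompactSupport (coneTruncation K R h) :=
  HasCompactSupport.intro (isCompact_closedBall 0 R) fun x hx ↦ by
    have hxR : R - ‖x‖ ≤ 0 := by simpa using (not_le.1 (mt mem_closedBall_zero_iff.2 hx)).le
    rw [coneTruncation, max_eq_right (mul_nonpos_of_nonneg_of_nonpos K.coe_nonneg hxR),
      symmClamp_zero_left]

lemma eventually_coneTruncation_eq {K : ℝ≥0} (hK : K ≠ 0) (h : E → ℝ) (x : E) :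
    ∀ᶠ n : ℕ in atTop, coneTruncation K n h x = h x := by
  filter_upwards [tendsto_natCast_atTop_atTop.eventually_ge_atTop (|h x| / K + ‖x‖)] with n hn
  have hK' : (0 : ℝ) < K := NNReal.coe_pos.2 (pos_iff_ne_zero.2 hK)
  exact coneTruncation_eq_self ((div_le_iff₀' hK').1 (le_sub_iff_add_le.2 hn))

end Truncation

section Mollification

variable {G F : Type*} [NormedAddCommGroup F] [NormedSpace ℝ F]

lemma lipschitzWith_convolution_of_integral_norm_le [SeminormedAddCommGroup G] [MeasurableSpace G]
    {μ : Measure G} {f : G → ℝ} {g : G → F} {C K : ℝ≥0} (hf : Integrable f μ)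
    (hC : ∫ t, ‖f t‖ ∂μ ≤ C) (hg : LipschitzWith K g)
    (hfg : ConvolutionExists f g (lsmul ℝ ℝ) μ) :
    LipschitzWith (C * K) (f ⋆[lsmul ℝ ℝ, μ] g) :=
  LipschitzWith.of_dist_le_mul fun x y ↦ by
    have pointwise_bound (t : G) :
        ‖f t • g (x - t) - f t • g (y - t)‖ ≤ ‖f t‖ * (K * dist x y) := by
      rw [← smul_sub, norm_smul, ← dist_eq_norm (g _), ← dist_sub_right x y t]
      gcongr
      exact hg.dist_le_mul _ _
    calc dist ((f ⋆[lsmul ℝ ℝ, μ] g) x) ((f ⋆[lsmul ℝ ℝ, μ] g) y)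
        = ‖∫ t, (f t • g (x - t) - f t • g (y - t)) ∂μ‖ := by
          rw [dist_eq_norm]
          exact congrArg norm (integral_sub (hfg x) (hfg y)).symm
      _ ≤ ∫ t, ‖f t‖ * (K * dist x y) ∂μ :=
          norm_integral_le_of_norm_le (hf.norm.mul_const _) (.of_forall pointwise_bound)
      _ = (∫ t, ‖f t‖ ∂μ) * (K * dist x y) := integral_mul_const _ _
      _ ≤ C * (K * dist x y) := by gcongr
      _ = ↑(C * K) * dist x y := by rw [NNReal.coe_mul, mul_assoc]

variable [NormedAddCommGroup G] [NormedSpace ℝ G] [FiniteDimensional ℝ G]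

lemma lipschitzWith_normed_convolution [MeasurableSpace G] [BorelSpace G] {μ : Measure G}
    [μ.IsAddHaarMeasure] (φ : ContDiffBump (0 : G)) {g : G → F} {K : ℝ≥0} (hg : LipschitzWith K g) :
    LipschitzWith K (φ.normed μ ⋆[lsmul ℝ ℝ, μ] g) := by
  have integral_norm_normed : ∫ t, ‖φ.normed μ t‖ ∂μ = 1 := by
    simp only [norm_of_nonneg (φ.nonneg_normed _), φ.integral_normed]
  simpa only [one_mul] using lipschitzWith_convolution_of_integral_norm_le (C := 1)
    φ.integrable_normed integral_norm_normed.le hg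
    (φ.hasCompactSupport_normed.convolutionExists_left _ φ.continuous_normed
      hg.continuous.locallyIntegrable)

lemma exists_contDiff_hasCompactSupport_lipschitzWith_dist_le [CompleteSpace F] {g : G → F}
    {K : ℝ≥0} (hg : LipschitzWith K g) (hgc : HasCompactSupport g) {ε : ℝ} (hε : 0 < ε) :
    ∃ k : G → F, ContDiff ℝ ∞ k ∧ HasCompactSupport k ∧ LipschitzWith K k ∧
      ∀ x, dist (k x) (g x) ≤ ε := by
  borelize G
  let μ : Measure G := Measure.addHaar
  obtain ⟨δ, hδ, hKδ⟩ : ∃ δ > 0, K * δ ≤ ε := by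
    refine ⟨ε / (K + 1), by positivity, ?_⟩
    rw [mul_div_left_comm]
    exact mul_le_of_le_one_right hε.le ((div_le_one (by positivity)).2 (by linarith))
  let φ : ContDiffBump (0 : G) := ⟨δ / 2, δ, half_pos hδ, half_lt_self hδ⟩
  refine ⟨φ.normed μ ⋆[lsmul ℝ ℝ, μ] g, ?_, ?_, lipschitzWith_normed_convolution φ hg, fun x ↦ ?_⟩
  · exact φ.hasCompactSupport_normed.contDiff_convolution_left _ φ.contDiff_normed
      hg.continuous.locallyIntegrable
  · exact φ.hasCompactSupport_normed.convolution _ hgc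
  · refine φ.dist_normed_convolution_le hg.continuous.aestronglyMeasurable fun y hy ↦ ?_
    calc dist (g y) (g x) ≤ K * dist y x := hg.dist_le_mul y x
      _ ≤ K * δ := by gcongr; exact (mem_ball.1 hy).le
      _ ≤ ε := hKδ

end Mollification

section Approximation

variable {E : Type*} [NormedAddCommGroup E] [NormedSpace ℝ E] [FiniteDimensional ℝ E]

lemma exists_seq_contDiff_hasCompactSupport_lipschitzWith_tendsto {K : ℝ≥0} (hK : K ≠ 0)
    {h : E → ℝ} (hh : LipschitzWith K h) :
    ∃ k : ℕ → E → ℝ,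
      (∀ n, ContDiff ℝ ∞ (k n) ∧ HasCompactSupport (k n) ∧ LipschitzWith K (k n)) ∧
      (∀ n x, |k n x| ≤ |h x| + 1) ∧ ∀ x, Tendsto (k · x) atTop (𝓝 (h x)) := by
  choose k k_smooth k_supp k_lip k_dist using fun n : ℕ ↦
    exists_contDiff_hasCompactSupport_lipschitzWith_dist_le (lipschitzWith_coneTruncation n hh)
      (hasCompactSupport_coneTruncation K n h) (Nat.one_div_pos_of_nat (α := ℝ) (n := n))
  refine ⟨k, fun n ↦ ⟨k_smooth n, k_supp n, k_lip n⟩, fun n x ↦ ?_, fun x ↦ ?_⟩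
  · have inv_le_one : 1 / ((n : ℝ) + 1) ≤ 1 := by
      simpa using Nat.one_div_le_one_div (α := ℝ) n.zero_le
    calc |k n x| ≤ |coneTruncation K n h x| + |k n x - coneTruncation K n h x| :=
          sub_le_iff_le_add'.1 (abs_sub_abs_le_abs_sub _ _)
      _ ≤ |h x| + 1 := add_le_add (abs_coneTruncation_le K n h x) ((k_dist n x).trans inv_le_one)
  · refine tendsto_iff_dist_tendsto_zero.2 (squeeze_zero' (.of_forall fun _ ↦ dist_nonneg) ?_
      tendsto_one_div_add_atTop_nhds_zero_nat)
    filter_upwards [eventually_coneTruncation_eq hK h x] with n hn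
    exact hn ▸ k_dist n x

lemma exists_seq_contDiff_hasCompactSupport_lipschitzWith_tendsto_integral [MeasurableSpace E]
    [BorelSpace E] {K : ℝ≥0} (hK : K ≠ 0) {h : E → ℝ} (hh : LipschitzWith K h) :
    ∃ k : ℕ → E → ℝ,
      (∀ n, ContDiff ℝ ∞ (k n) ∧ HasCompactSupport (k n) ∧ LipschitzWith K (k n)) ∧
      ∀ (μ : Measure E) [IsFiniteMeasure μ], Integrable h μ →
        Tendsto (fun n ↦ ∫ x, k n x ∂μ) atTop (𝓝 (∫ x, h x ∂μ)) := by
  obtain ⟨k, hk, k_le, k_tendsto⟩ :=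
    exists_seq_contDiff_hasCompactSupport_lipschitzWith_tendsto hK hh
  refine ⟨k, hk, fun μ _ hμ ↦ ?_⟩
  exact tendsto_integral_of_dominated_convergence (fun x ↦ |h x| + 1)
    (fun n ↦ (hk n).1.continuous.aestronglyMeasurable) (hμ.abs.add (integrable_const 1))
    (fun n ↦ .of_forall (k_le n)) (.of_forall k_tendsto)

end Approximation

section FirstMoment

variable {E F : Type*} [SeminormedAddCommGroup E] [MeasurableSpace E] [OpensMeasurableSpace E]
  [NormedAddCommGroup F] [SecondCountableTopologyEither E F] {μ ν : Measure E} [IsFiniteMeasure μ]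
  {h : E → F} {K : ℝ≥0}

lemma integrable_of_lipschitzWith (hμ : Integrable (‖·‖) μ) (hh : LipschitzWith K h) :
    Integrable h μ := by
  refine ((hμ.const_mul K).add (integrable_const ‖h 0‖)).mono' hh.continuous.aestronglyMeasurable
    (.of_forall fun x ↦ ?_)
  calc ‖h x‖ ≤ ‖h x - h 0‖ + ‖h 0‖ := norm_le_norm_sub_add _ _
    _ ≤ K * ‖x‖ + ‖h 0‖ := by
      gcongr
      simpa only [sub_zero] using hh.norm_sub_le x 0

variable [NormedSpace ℝ F] [IsFiniteMeasure ν]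

lemma norm_integral_sub_integral_le_of_lipschitzWith [CompleteSpace F] (hμν : μ univ = ν univ)
    (hμ : Integrable (‖·‖) μ) (hν : Integrable (‖·‖) ν) (hh : LipschitzWith K h) :
    ‖∫ x, h x ∂μ - ∫ x, h x ∂ν‖ ≤ K * (∫ x, ‖x‖ ∂μ + ∫ x, ‖x‖ ∂ν) := by
  have norm_sub_zero_le (x : E) : ‖h x - h 0‖ ≤ K * ‖x‖ := by
    simpa only [sub_zero] using hh.norm_sub_le x 0
  have integral_sub_eq : ∫ x, h x ∂μ - ∫ x, h x ∂ν =
      ∫ x, (h x - h 0) ∂μ - ∫ x, (h x - h 0) ∂ν := by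
    rw [integral_sub (integrable_of_lipschitzWith hμ hh) (integrable_const _),
      integral_sub (integrable_of_lipschitzWith hν hh) (integrable_const _), integral_const,
      integral_const, Measure.real, Measure.real, hμν, sub_sub_sub_cancel_right]
  calc ‖∫ x, h x ∂μ - ∫ x, h x ∂ν‖
      ≤ ‖∫ x, (h x - h 0) ∂μ‖ + ‖∫ x, (h x - h 0) ∂ν‖ := integral_sub_eq ▸ norm_sub_le _ _
    _ ≤ ∫ x, K * ‖x‖ ∂μ + ∫ x, K * ‖x‖ ∂ν := add_le_add
        (norm_integral_le_of_norm_le (hμ.const_mul _) (.of_forall norm_sub_zero_le))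
        (norm_integral_le_of_norm_le (hν.const_mul _) (.of_forall norm_sub_zero_le))
    _ = K * (∫ x, ‖x‖ ∂μ + ∫ x, ‖x‖ ∂ν) := by
        rw [integral_const_mul, integral_const_mul, mul_add]

end FirstMoment

theorem wasserstein_smooth_compact_duality_general {E : Type*} [NormedAddCommGroup E]
    [NormedSpace ℝ E] [FiniteDimensional ℝ E] [MeasurableSpace E] [BorelSpace E]
    {μ ν : Measure E} [IsFiniteMeasure μ] [IsFiniteMeasure ν] (hμν : μ univ = ν univ)
    (hμ : Integrable (fun x : E ↦ ‖x‖) μ) (hν : Integrable (fun x : E ↦ ‖x‖) ν) :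
    sSup {r : ℝ | ∃ h : E → ℝ, LipschitzWith 1 h ∧ r = |(∫ x, h x ∂μ) - ∫ x, h x ∂ν|} =
      sSup {r : ℝ | ∃ h : E → ℝ, ContDiff ℝ ∞ h ∧ HasCompactSupport h ∧ LipschitzWith 1 h ∧
        r = |(∫ x, h x ∂μ) - ∫ x, h x ∂ν|} := by
  set S := {r : ℝ | ∃ h : E → ℝ, LipschitzWith 1 h ∧ r = |(∫ x, h x ∂μ) - ∫ x, h x ∂ν|}
  set T := {r : ℝ | ∃ h : E → ℝ, ContDiff ℝ ∞ h ∧ HasCompactSupport h ∧ LipschitzWith 1 h ∧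
    r = |(∫ x, h x ∂μ) - ∫ x, h x ∂ν|}
  have subset : T ⊆ S := fun r ⟨h, _, _, hh, hr⟩ ↦ ⟨h, hh, hr⟩
  have subset_closure : S ⊆ closure T := by
    rintro _ ⟨h, hh, rfl⟩
    obtain ⟨k, hk, k_tendsto⟩ :=
      exists_seq_contDiff_hasCompactSupport_lipschitzWith_tendsto_integral one_ne_zero hh
    refine mem_closure_of_tendsto (((k_tendsto μ (integrable_of_lipschitzWith hμ hh)).sub
      (k_tendsto ν (integrable_of_lipschitzWith hν hh))).abs) (.of_forall fun n ↦ ?_)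
    exact ⟨k n, (hk n).1, (hk n).2.1, (hk n).2.2, rfl⟩
  have nonempty : S.Nonempty := ⟨_, 0, LipschitzWith.const' 0, rfl⟩
  have bddAbove : BddAbove S := by
    refine ⟨(1 : ℝ≥0) * (∫ x, ‖x‖ ∂μ + ∫ x, ‖x‖ ∂ν), ?_⟩
    rintro _ ⟨h, hh, rfl⟩
    exact norm_integral_sub_integral_le_of_lipschitzWith hμν hμ hν hh
  have isLUB : IsLUB T (sSup S) :=
    (isLUB_iff_of_subset_of_subset_closure subset subset_closure).2 (isLUB_csSup nonempty bddAbove)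
  exact (isLUB.csSup_eq (closure_nonempty_iff.1 (nonempty.mono subset_closure))).symm

/-- Kantorovich–Rubinstein duality with smooth test functions: for probability measures
`μ, ν` on `ℝ^d` with finite first moments, the `1`-Wasserstein distance
`W₁(μ,ν) = sup {|∫h dμ - ∫h dν| : h 1-Lipschitz}` coincides with the supremum restricted
to smooth compactly supported 1-Lipschitz functions. -/
theorem wasserstein_smooth_compact_duality (d : ℕ)
    (μ ν : Measure (EuclideanSpace ℝ (Fin d)))
    [IsProbabilityMeasure μ] [IsProbabilityMeasure ν]
    (hμ : Integrable (fun x : EuclideanSpace ℝ (Fin d) => ‖x‖) μ)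
    (hν : Integrable (fun x : EuclideanSpace ℝ (Fin d) => ‖x‖) ν) :
    sSup {r : ℝ | ∃ h : EuclideanSpace ℝ (Fin d) → ℝ, LipschitzWith 1 h ∧
        r = |(∫ x, h x ∂μ) - ∫ x, h x ∂ν|} =
      sSup {r : ℝ | ∃ h : EuclideanSpace ℝ (Fin d) → ℝ, ContDiff ℝ (⊤ : ℕ∞) h ∧ HasCompactSupport h ∧
        LipschitzWith 1 h ∧ r = |(∫ x, h x ∂μ) - ∫ x, h x ∂ν|} :=
  wasserstein_smooth_compact_duality_general (by rw [measure_univ, measure_univ]) hμ hν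
end
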